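/- Let γ: ℝ/ℤ → ℝ³ be a smooth injective closed curve parametrized by arc length (|γ′| ≡ 1, total length 1), let v: ℝ³ → ℝ⁵ be the light-cone lift v(p) = ((1+|p|²)/2, p, (1−|p|²)/2), and for x ≠ y define s(x,y) = v(γ(x)) ∧ v(γ(y)) / √(B₂(v(γ(x))∧v(γ(y)), v(γ(x))∧v(γ(y)))) ∈ ⋀²ℝ⁵. Then O'Hara's energy satisfies E∘(γ) := −4 + ∬_{(ℝ/ℤ)²} ( 1/|γ(x)−γ(y)|² − 1/d(x,y)² ) dx dy = ∬_{(ℝ/ℤ)²} ( 1/|γ(x)−γ(y)|² − (1/2)·B₂( ∂s/∂x, ∂s/∂y ) ) dx dy, and the integrand on the right-hand side is nonnegative and integrable. (This combines the cosine formula E∘ = ∬(|Ω|−Re Ω) with the identification Re Ω = (1/2)⟨s_x,s_y⟩ dx∧dy of the real part of the infinitesimal cross ratio with half the signed area form.) -/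

import Mathlib

/-!
Write `D = γ x - γ y`, `T = γ' x` and `S = γ' y`. Differentiating the normalized wedge gives
`(1/2) B₂(∂s/∂x, ∂s/∂y) = ⟪R T, S⟫ / |D|²`, where `R` is the reflection in the line `ℝ D`: the
real part of the infinitesimal cross ratio. As `R T` and `S` are unit vectors this is at most
`1 / |D|²`, and the difference is `|R T - S|² / (2 |D|²)`, which is bounded because `R` fixes `D`
and both `T` and `S` are `O(|x - y|)`-close to `D / (x - y)`.

For fixed `x`, a primitive of `y ↦ ⟪R T, S⟫ / |D|²` is `⟪D, T⟫ / |D|²`, up to sign the coordinate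
along `T` of `γ` inverted at `γ x`. It is periodic and differs from `1 / (x - y)`, a primitive of
`1 / (x - y)²`, by `O(|x - y|)` near the diagonal. Hence, integrated over a period centred at `x`,
`⟪R T, S⟫ / |D|² - 1 / d(x, y)²` gives the jump of `-1 / (x - y)` between the ends, which is `4`.
-/

open MeasureTheory

noncomputable section

/-- ℝ³ with the Euclidean norm. -/
abbrev E3 := EuclideanSpace ℝ (Fin 3)

/-- The arc-length distance on ℝ/ℤ, written for parameters `s, t ∈ [0,1]`. -/
def arcd (s t : ℝ) : ℝ := min |s - t| (1 - |s - t|)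

/-- The Minkowski bilinear form `B(x,y) = −x₀y₀ + Σ_{i=1}^{4} x_i y_i` on `ℝ⁵`. -/
def B5 (x y : Fin 5 → ℝ) : ℝ := (∑ i, x i * y i) - 2 * x 0 * y 0

/-- The Lorentz signature vector `η = (−1,1,1,1,1)`. -/
def lsgn : Fin 5 → ℝ := fun i => if i = 0 then -1 else 1

/-- The wedge `a ∧ b ∈ ⋀²ℝ⁵`, realized as the antisymmetric array
`(a ∧ b)_{ij} = a_i b_j − a_j b_i`. -/
def wedge2 (a b : Fin 5 → ℝ) : Fin 5 → Fin 5 → ℝ := fun i j => a i * b j - a j * b i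

/-- The bilinear form induced by `B` on `⋀²ℝ⁵`: on decomposables it satisfies
`B₂(a∧b, c∧d) = −(B(a,c)B(b,d) − B(a,d)B(b,c))`. -/
def B2 (M N : Fin 5 → Fin 5 → ℝ) : ℝ :=
  -(1 / 2) * ∑ i, ∑ j, lsgn i * lsgn j * M i j * N i j

/-- The light-cone lift `v(p) = ((1+|p|²)/2, p, (1−|p|²)/2)` of a point of ℝ³. -/
def lcLift (p : E3) : Fin 5 → ℝ :=
  ![(1 + ‖p‖ ^ 2) / 2, p 0, p 1, p 2, (1 - ‖p‖ ^ 2) / 2]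

/-- The normalized wedge `s(x,y)` of the light-cone lifts of two points of the knot. -/
def nwedge (γ : ℝ → E3) (x y : ℝ) : Fin 5 → Fin 5 → ℝ :=
  (Real.sqrt (B2 (wedge2 (lcLift (γ x)) (lcLift (γ y)))
      (wedge2 (lcLift (γ x)) (lcLift (γ y)))))⁻¹ •
    wedge2 (lcLift (γ x)) (lcLift (γ y))

section Calculus

open Function
open scoped NNReal

variable {F : Type*} [NormedAddCommGroup F] [NormedSpace ℝ F]

lemma periodic_deriv {f : ℝ → F} {c : ℝ} (hf : Periodic f c) : Periodic (deriv f) c := by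
  intro x
  rw [← deriv_comp_add_const, funext hf]

lemma exists_lipschitzWith_of_periodic {f : ℝ → F} {c : ℝ} (hf : ContDiff ℝ 1 f)
    (hper : Periodic f c) (hc : c ≠ 0) : ∃ K : ℝ≥0, LipschitzWith K f := by
  obtain ⟨C, hC⟩ := ((periodic_deriv hper).isBounded_of_continuous hc
    (hf.continuous_deriv le_rfl)).exists_norm_le
  have hC0 : 0 ≤ C := (norm_nonneg _).trans (hC _ (Set.mem_range_self 0))
  exact ⟨⟨C, hC0⟩, lipschitzWith_of_nnnorm_deriv_le (hf.differentiable one_ne_zero)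
    fun x => hC _ (Set.mem_range_self x)⟩

lemma norm_sub_sub_smul_le_of_norm_deriv_sub_le {f f' : ℝ → F} {v : F} {x y C : ℝ}
    (hf : ∀ u ∈ Set.uIcc x y, HasDerivAt f (f' u) u)
    (hC : ∀ u ∈ Set.uIcc x y, ‖f' u - v‖ ≤ C) :
    ‖f x - f y - (x - y) • v‖ ≤ C * |x - y| := by
  have hderiv : ∀ u ∈ Set.uIcc x y,
      HasDerivWithinAt (fun u => f u - u • v) (f' u - v) (Set.uIcc x y) u := fun u hu => by
    have h := (hf u hu).sub ((hasDerivAt_id u).smul_const v)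
    rw [one_smul] at h
    exact h.hasDerivWithinAt
  have hmvt := (convex_uIcc x y).norm_image_sub_le_of_norm_hasDerivWithin_le hderiv hC
    Set.right_mem_uIcc Set.left_mem_uIcc
  rwa [sub_sub_sub_comm, ← sub_smul, Real.norm_eq_abs] at hmvt

lemma norm_sub_sub_smul_deriv_le {f : ℝ → F} {K : ℝ≥0} (hd : Differentiable ℝ f)
    (hlip : LipschitzWith K (deriv f)) (x y : ℝ) :
    ‖f x - f y - (x - y) • deriv f x‖ ≤ K * |x - y| ^ 2 := by
  refine (norm_sub_sub_smul_le_of_norm_deriv_sub_le (C := K * |x - y|)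
    (fun u _ => (hd u).hasDerivAt) fun u hu => ?_).trans_eq (by ring)
  refine (hlip.norm_sub_le u x).trans ?_
  gcongr
  rw [Real.norm_eq_abs, abs_sub_comm x y]
  exact Set.abs_sub_left_of_mem_uIcc hu

end Calculus

section ChordArc

open Function
open scoped NNReal

lemma ne_of_abs_sub_lt_one {X : Type*} {γ : ℝ → X} (hinj : ∀ s t, γ s = γ t → ∃ n : ℤ, s - t = n)
    {x y : ℝ} (hxy : |x - y| < 1) (hne : x ≠ y) : γ x ≠ γ y := by
  intro h
  obtain ⟨n, hn⟩ := hinj x y h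
  rw [hn] at hxy
  have hn0 : n = 0 := Int.abs_lt_one_iff.1 (by exact_mod_cast hxy)
  rw [hn0, Int.cast_zero, sub_eq_zero] at hn
  exact hne hn

/-- The chord-arc bound with constant `c` for a closed curve of length `1`: chords are at least
`c` times the arcs they span. Restricting to arcs of length at most `1 / 2` makes `|x - y|` the
arc-length distance. -/
def ChordArcBound {F : Type*} [NormedAddCommGroup F] (c : ℝ) (γ : ℝ → F) : Prop :=
  ∀ ⦃x y : ℝ⦄, |x - y| ≤ 1 / 2 → c * |x - y| ≤ ‖γ x - γ y‖

variable {F : Type*} [NormedAddCommGroup F] {γ : ℝ → F}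

lemma exists_pos_forall_le_norm_sub (hcont : Continuous γ) (hper : Periodic γ 1)
    (hinj : ∀ s t, γ s = γ t → ∃ n : ℤ, s - t = n) {δ : ℝ} (hδ : 0 < δ) :
    ∃ m > 0, ∀ x y, δ ≤ |x - y| → |x - y| ≤ 1 / 2 → m ≤ ‖γ x - γ y‖ := by
  let S : Set (ℝ × ℝ) := (Set.Icc 0 1 ×ˢ Set.Icc (-1) 2) ∩
    ({p | δ ≤ |p.1 - p.2|} ∩ {p | |p.1 - p.2| ≤ 1 / 2})
  have hS : IsCompact S := (isCompact_Icc.prod isCompact_Icc).inter_right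
    ((isClosed_le (by fun_prop) (by fun_prop)).inter (isClosed_le (by fun_prop) (by fun_prop)))
  have hpos : ∀ p ∈ S, 0 < ‖γ p.1 - γ p.2‖ := fun p ⟨_, hδp, hp⟩ =>
    norm_pos_iff.2 <| sub_ne_zero.2 <| ne_of_abs_sub_lt_one hinj (hp.trans_lt one_half_lt_one) <|
      sub_ne_zero.1 <| abs_pos.1 <| hδ.trans_le hδp
  obtain ⟨m, hm, hmS⟩ := hS.exists_forall_le' (Continuous.continuousOn (by fun_prop)) hpos
  refine ⟨m, hm, fun x y hδxy hxy => ?_⟩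
  have hshift : (x - ⌊x⌋) - (y - ⌊x⌋) = x - y := by ring
  have hγ (z : ℝ) : γ (z - ⌊x⌋) = γ z := by simpa using hper.sub_int_mul_eq ⌊x⌋ (x := z)
  have hx0 : 0 ≤ x - ⌊x⌋ := Int.fract_nonneg x
  have hx1 : x - ⌊x⌋ ≤ 1 := (Int.fract_lt_one x).le
  have hmem : (x - ⌊x⌋, y - ⌊x⌋) ∈ S := by
    refine ⟨⟨⟨hx0, hx1⟩, ?_⟩, ?_, ?_⟩
    · constructor <;> linarith [abs_le.1 hxy]
    · simpa only [Set.mem_ofPred_eq, hshift] using hδxy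
    · simpa only [Set.mem_ofPred_eq, hshift] using hxy
  simpa only [hγ] using hmS _ hmem

variable [NormedSpace ℝ F] {K : ℝ≥0}

lemma half_abs_sub_le_norm_sub (hd : Differentiable ℝ γ) (hlip : LipschitzWith K (deriv γ))
    {x y : ℝ} (hunit : ‖deriv γ x‖ = 1) (hxy : K * |x - y| ≤ 1 / 2) :
    1 / 2 * |x - y| ≤ ‖γ x - γ y‖ := by
  have htaylor := norm_sub_sub_smul_deriv_le hd hlip x y
  have hchord := norm_sub_norm_le ((x - y) • deriv γ x) ((x - y) • deriv γ x - (γ x - γ y))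
  rw [sub_sub_cancel, norm_smul, hunit, mul_one, Real.norm_eq_abs, norm_sub_rev] at hchord
  have hquad : K * |x - y| ^ 2 ≤ 1 / 2 * |x - y| := by
    rw [sq, ← mul_assoc]
    gcongr
  linarith

lemma exists_chordArcBound (hd : Differentiable ℝ γ) (hlip : LipschitzWith K (deriv γ))
    (hper : Periodic γ 1) (hinj : ∀ s t, γ s = γ t → ∃ n : ℤ, s - t = n)
    (hunit : ∀ s, ‖deriv γ s‖ = 1) : ∃ c > 0, ChordArcBound c γ := by
  obtain ⟨m, hm, hfar⟩ := exists_pos_forall_le_norm_sub hd.continuous hper hinj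
    (δ := 1 / (2 * ((K : ℝ) + 1))) (by positivity)
  refine ⟨min (1 / 2) m, by positivity, fun x y hxy => ?_⟩
  rcases le_total (1 / (2 * ((K : ℝ) + 1))) |x - y| with h | h
  · calc min (1 / 2) m * |x - y| ≤ m * 1 := by
          gcongr
          · exact min_le_right _ _
          · linarith
      _ ≤ ‖γ x - γ y‖ := by simpa using hfar x y h hxy
  · have hK : K * |x - y| ≤ 1 / 2 := by
      rw [le_div_iff₀ (by positivity)] at h
      linarith [abs_nonneg (x - y)]
    exact (by gcongr; exact min_le_left _ _ : min (1 / 2) m * |x - y| ≤ 1 / 2 * |x - y|).trans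
      (half_abs_sub_le_norm_sub hd hlip (hunit x) hK)

end ChordArc

section CrossRatio

open Function
open scoped RealInnerProductSpace

variable {E : Type*} [NormedAddCommGroup E] [InnerProductSpace ℝ E] {γ : ℝ → E} {x y : ℝ}

lemma norm_reflection_sub_le (U : Submodule ℝ E) [U.HasOrthogonalProjection] {w : E} (hw : w ∈ U)
    (v : E) : ‖U.reflection v - v‖ ≤ 2 * ‖v - w‖ := by
  have hfix : U.reflection v - v = U.reflection (v - w) - (v - w) := by
    rw [map_sub, U.reflection_mem_subspace_eq_self hw, sub_sub_sub_cancel_right]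
  calc ‖U.reflection v - v‖ ≤ ‖U.reflection (v - w)‖ + ‖v - w‖ := hfix ▸ norm_sub_le _ _
    _ = 2 * ‖v - w‖ := by rw [LinearIsometryEquiv.norm_map, two_mul]

lemma one_sub_inner_eq_half_norm_sub_sq {u v : E} (hu : ‖u‖ = 1) (hv : ‖v‖ = 1) :
    1 - ⟪u, v⟫ = ‖u - v‖ ^ 2 / 2 := by
  rw [norm_sub_sq_real, hu, hv]
  ring

/-- The real part of the infinitesimal cross ratio of the unit-speed curve `γ` at `(x, y)`, as a
density with respect to `dx dy`: `cos θ / |γ x - γ y|²`, where `θ` is the angle at `γ y` between `γ`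
and the circle through `γ y` tangent to `γ` at `γ x`. Reflecting the tangent vector of that circle
at `γ x` in the chord gives its tangent vector at `γ y`. The value is `0` where `γ x = γ y`. -/
def crossRatioRe (γ : ℝ → E) (x y : ℝ) : ℝ :=
  ⟪(ℝ ∙ (γ x - γ y)).reflection (deriv γ x), deriv γ y⟫ / ‖γ x - γ y‖ ^ 2

lemma crossRatioRe_eq (γ : ℝ → E) (x y : ℝ) :
    crossRatioRe γ x y =
      2 * ⟪γ x - γ y, deriv γ x⟫ * ⟪γ x - γ y, deriv γ y⟫ / ‖γ x - γ y‖ ^ 4 -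
        ⟪deriv γ x, deriv γ y⟫ / ‖γ x - γ y‖ ^ 2 := by
  rw [crossRatioRe, Submodule.reflection_singleton_apply, inner_sub_left, two_smul, ← two_smul ℝ,
    inner_smul_left, inner_smul_left]
  simp only [Real.ringHom_apply]
  ring

lemma periodic_crossRatioRe {c : ℝ} (hper : Periodic γ c) (x : ℝ) :
    Periodic (crossRatioRe γ x) c :=
  fun y => by simp only [crossRatioRe, hper y, periodic_deriv hper y]

lemma measurable_crossRatioRe (hγ : Continuous γ) (hγ' : Continuous (deriv γ)) :
    Measurable fun p : ℝ × ℝ => crossRatioRe γ p.1 p.2 := by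
  simp only [crossRatioRe_eq]
  exact .sub (.div (Continuous.measurable (by fun_prop)) (Continuous.measurable (by fun_prop)))
    (.div (Continuous.measurable (by fun_prop)) (Continuous.measurable (by fun_prop)))

lemma one_div_norm_sq_sub_crossRatioRe (hx : ‖deriv γ x‖ = 1) (hy : ‖deriv γ y‖ = 1) :
    1 / ‖γ x - γ y‖ ^ 2 - crossRatioRe γ x y =
      ‖(ℝ ∙ (γ x - γ y)).reflection (deriv γ x) - deriv γ y‖ ^ 2 / (2 * ‖γ x - γ y‖ ^ 2) := by
  rw [crossRatioRe, ← sub_div, one_sub_inner_eq_half_norm_sub_sq (by simpa using hx) hy, div_div]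

/-- Up to sign, the coordinate along `deriv γ x` of the image of `γ y` under inversion in the unit
sphere centred at `γ x`; as a function of `y` it is a primitive of `crossRatioRe γ x`. -/
def invertedTangentCoord (γ : ℝ → E) (x y : ℝ) : ℝ :=
  ⟪γ x - γ y, deriv γ x⟫ / ‖γ x - γ y‖ ^ 2

lemma periodic_invertedTangentCoord {c : ℝ} (hper : Periodic γ c) (x : ℝ) :
    Periodic (invertedTangentCoord γ x) c :=
  fun y => by simp only [invertedTangentCoord, hper y]

lemma hasDerivAt_invertedTangentCoord (hd : DifferentiableAt ℝ γ y) (hne : γ x ≠ γ y) :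
    HasDerivAt (invertedTangentCoord γ x) (crossRatioRe γ x y) y := by
  have hr : ‖γ x - γ y‖ ≠ 0 := norm_ne_zero_iff.2 (sub_ne_zero.2 hne)
  have hD : HasDerivAt (fun y => γ x - γ y) (-deriv γ y) y := hd.hasDerivAt.const_sub (γ x)
  refine ((hD.inner ℝ (hasDerivAt_const y (deriv γ x))).fun_div hD.norm_sq
    (pow_ne_zero 2 hr)).congr_deriv ?_
  rw [crossRatioRe_eq, real_inner_comm (deriv γ y) (deriv γ x)]
  simp only [inner_zero_right, inner_neg_left, inner_neg_right]
  field_simp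
  ring

end CrossRatio

section LightCone

lemma B2_wedge2 (a b c d : Fin 5 → ℝ) :
    B2 (wedge2 a b) (wedge2 c d) = -(B5 a c * B5 b d - B5 a d * B5 b c) := by
  simp only [B2, wedge2, B5, lsgn, Fin.sum_univ_five, Fin.reduceEq, if_true, if_false]
  ring

lemma B2_smul_add_smul (k l m n : ℝ) (A B C D : Fin 5 → Fin 5 → ℝ) :
    B2 (k • A + l • B) (m • C + n • D) =
      k * m * B2 A C + k * n * B2 A D + l * m * B2 B C + l * n * B2 B D := by
  simp only [B2, Fin.sum_univ_five, Pi.add_apply, Pi.smul_apply, smul_eq_mul]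
  ring

lemma wedge2_swap (a b : Fin 5 → ℝ) : wedge2 a b = -wedge2 b a := by
  ext i j
  simp only [wedge2, Pi.neg_apply]
  ring

lemma B5_comm (a b : Fin 5 → ℝ) : B5 a b = B5 b a := by
  simp only [B5, Fin.sum_univ_five]
  ring

/-- The differential of the light-cone lift at `p`, applied to the tangent vector `q`. -/
def lcLiftDeriv (p q : E3) : Fin 5 → ℝ :=
  ![inner ℝ p q, q 0, q 1, q 2, -inner ℝ p q]

lemma B5_lcLift_lcLift (p q : E3) : B5 (lcLift p) (lcLift q) = -‖p - q‖ ^ 2 / 2 := by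
  simp only [B5, lcLift, Fin.sum_univ_five, Fin.sum_univ_three, Matrix.cons_val,
    EuclideanSpace.norm_sq_eq, Real.norm_eq_abs, sq_abs, PiLp.sub_apply]
  ring

lemma B5_lcLiftDeriv_lcLift (p p' q : E3) :
    B5 (lcLiftDeriv p p') (lcLift q) = -inner ℝ (p - q) p' := by
  simp only [B5, lcLift, lcLiftDeriv, Fin.sum_univ_five, Fin.sum_univ_three, Matrix.cons_val,
    EuclideanSpace.norm_sq_eq, Real.norm_eq_abs, sq_abs, PiLp.inner_apply, PiLp.sub_apply,
    RCLike.inner_apply, Real.ringHom_apply]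
  ring

lemma B5_lcLiftDeriv_lcLiftDeriv (p p' q q' : E3) :
    B5 (lcLiftDeriv p p') (lcLiftDeriv q q') = inner ℝ p' q' := by
  simp only [B5, lcLiftDeriv, Fin.sum_univ_five, Fin.sum_univ_three, Matrix.cons_val,
    PiLp.inner_apply, RCLike.inner_apply, Real.ringHom_apply]
  ring

lemma hasDerivAt_lcLift_comp {γ : ℝ → E3} {T : E3} {x : ℝ} (hγ : HasDerivAt γ T x) :
    HasDerivAt (fun u => lcLift (γ u)) (lcLiftDeriv (γ x) T) x := by
  have hcoord (i : Fin 3) : HasDerivAt (fun u => γ u i) (T i) x :=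
    (EuclideanSpace.proj (𝕜 := ℝ) i).hasFDerivAt.comp_hasDerivAt x hγ
  refine hasDerivAt_pi.2 fun i => ?_
  fin_cases i
  · simpa [lcLift, lcLiftDeriv] using (hγ.norm_sq.const_add 1).div_const 2
  · simpa [lcLift, lcLiftDeriv] using hcoord 0
  · simpa [lcLift, lcLiftDeriv] using hcoord 1
  · simpa [lcLift, lcLiftDeriv] using hcoord 2
  · simpa [lcLift, lcLiftDeriv, neg_div] using (hγ.norm_sq.const_sub 1).div_const 2

lemma hasDerivAt_wedge2_const {f : ℝ → Fin 5 → ℝ} {f' : Fin 5 → ℝ} {x : ℝ}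
    (hf : HasDerivAt f f' x) (b : Fin 5 → ℝ) :
    HasDerivAt (fun u => wedge2 (f u) b) (wedge2 f' b) x := by
  rw [hasDerivAt_pi] at hf
  exact hasDerivAt_pi.2 fun i => hasDerivAt_pi.2 fun j =>
    ((hf i).mul_const _).sub ((hf j).mul_const _)

lemma nwedge_eq_smul_wedge2 (γ : ℝ → E3) (x y : ℝ) :
    nwedge γ x y = (‖γ x - γ y‖ ^ 2 / 2)⁻¹ • wedge2 (lcLift (γ x)) (lcLift (γ y)) := by
  have hB : B2 (wedge2 (lcLift (γ x)) (lcLift (γ y))) (wedge2 (lcLift (γ x)) (lcLift (γ y))) =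
      (‖γ x - γ y‖ ^ 2 / 2) ^ 2 := by
    simp only [B2_wedge2, B5_lcLift_lcLift, sub_self, norm_zero, norm_sub_rev (γ y) (γ x)]
    ring
  rw [nwedge, hB, Real.sqrt_sq (by positivity)]

lemma nwedge_swap (γ : ℝ → E3) (x y : ℝ) : nwedge γ x y = -nwedge γ y x := by
  rw [nwedge_eq_smul_wedge2, nwedge_eq_smul_wedge2, norm_sub_rev, wedge2_swap, smul_neg]

lemma hasDerivAt_nwedge_left {γ : ℝ → E3} {T : E3} {x y : ℝ} (hγ : HasDerivAt γ T x)
    (hne : γ x ≠ γ y) :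
    HasDerivAt (fun u => nwedge γ u y)
      ((‖γ x - γ y‖ ^ 2 / 2)⁻¹ • wedge2 (lcLiftDeriv (γ x) T) (lcLift (γ y)) +
        (-inner ℝ (γ x - γ y) T / (‖γ x - γ y‖ ^ 2 / 2) ^ 2) •
          wedge2 (lcLift (γ x)) (lcLift (γ y))) x := by
  have hr : ‖γ x - γ y‖ ≠ 0 := norm_ne_zero_iff.2 (sub_ne_zero.2 hne)
  have hscale : HasDerivAt (fun u => (‖γ u - γ y‖ ^ 2 / 2)⁻¹)
      (-inner ℝ (γ x - γ y) T / (‖γ x - γ y‖ ^ 2 / 2) ^ 2) x :=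
    (((hγ.sub_const (γ y)).norm_sq.div_const 2).fun_inv (by positivity)).congr_deriv
      (by rw [mul_div_cancel_left₀ _ two_ne_zero])
  simp_rw [nwedge_eq_smul_wedge2]
  exact hscale.smul (hasDerivAt_wedge2_const (hasDerivAt_lcLift_comp hγ) _)

lemma hasDerivAt_nwedge_right {γ : ℝ → E3} {S : E3} {x y : ℝ} (hγ : HasDerivAt γ S y)
    (hne : γ x ≠ γ y) :
    HasDerivAt (fun v => nwedge γ x v)
      ((‖γ x - γ y‖ ^ 2 / 2)⁻¹ • wedge2 (lcLift (γ x)) (lcLiftDeriv (γ y) S) +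
        (inner ℝ (γ x - γ y) S / (‖γ x - γ y‖ ^ 2 / 2) ^ 2) •
          wedge2 (lcLift (γ x)) (lcLift (γ y))) y := by
  have hswap : (fun v => nwedge γ x v) = -fun v => nwedge γ v x :=
    funext fun v => nwedge_swap γ x v
  rw [hswap]
  refine (hasDerivAt_nwedge_left hγ hne.symm).neg.congr_deriv ?_
  rw [norm_sub_rev (γ y), wedge2_swap (lcLiftDeriv _ _), wedge2_swap (lcLift (γ y)),
    ← neg_sub (γ x) (γ y), inner_neg_left]
  simp [add_comm]

lemma half_B2_deriv_nwedge {γ : ℝ → E3} {T S : E3} {x y : ℝ} (hT : HasDerivAt γ T x)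
    (hS : HasDerivAt γ S y) (hne : γ x ≠ γ y) :
    (1 / 2) * B2 (deriv (fun u => nwedge γ u y) x) (deriv (fun v => nwedge γ x v) y) =
      2 * inner ℝ (γ x - γ y) T * inner ℝ (γ x - γ y) S / ‖γ x - γ y‖ ^ 4 -
        inner ℝ T S / ‖γ x - γ y‖ ^ 2 := by
  have hr : ‖γ x - γ y‖ ≠ 0 := norm_ne_zero_iff.2 (sub_ne_zero.2 hne)
  rw [(hasDerivAt_nwedge_left hT hne).deriv, (hasDerivAt_nwedge_right hS hne).deriv,
    B2_smul_add_smul]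
  simp only [B2_wedge2, B5_comm (lcLift _) (lcLiftDeriv _ _), B5_lcLiftDeriv_lcLift,
    B5_lcLiftDeriv_lcLiftDeriv, B5_lcLift_lcLift]
  rw [norm_sub_rev (γ y) (γ x), ← neg_sub (γ x) (γ y), inner_neg_left]
  simp only [sub_self, norm_zero, inner_zero_left]
  field_simp
  ring

lemma half_B2_deriv_nwedge_eq_crossRatioRe {γ : ℝ → E3} {x y : ℝ} (hx : DifferentiableAt ℝ γ x)
    (hy : DifferentiableAt ℝ γ y) (hne : γ x ≠ γ y) :
    (1 / 2) * B2 (deriv (fun u => nwedge γ u y) x) (deriv (fun v => nwedge γ x v) y) =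
      crossRatioRe γ x y := by
  rw [half_B2_deriv_nwedge hx.hasDerivAt hy.hasDerivAt hne, crossRatioRe_eq]

end LightCone

section DiagonalEstimates

open scoped NNReal RealInnerProductSpace

variable {E : Type*} [NormedAddCommGroup E] [InnerProductSpace ℝ E] {γ : ℝ → E} {x y c : ℝ}
  {K : ℝ≥0}

lemma abs_inner_sub_deriv_sub_le (hd : Differentiable ℝ γ) (hlip : LipschitzWith K (deriv γ))
    (hunit : ∀ s, ‖deriv γ s‖ = 1) (x y : ℝ) :
    |⟪γ x - γ y, deriv γ x⟫ - (x - y)| ≤ K ^ 2 * |x - y| ^ 3 / 2 := by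
  have hderiv : ∀ u ∈ Set.uIcc x y,
      HasDerivAt (fun u => ⟪γ u, deriv γ x⟫) ⟪deriv γ u, deriv γ x⟫ u := fun u _ => by
    simpa using (hd u).hasDerivAt.inner ℝ (hasDerivAt_const u (deriv γ x))
  have hbound : ∀ u ∈ Set.uIcc x y, ‖⟪deriv γ u, deriv γ x⟫ - 1‖ ≤ (K * |x - y|) ^ 2 / 2 := by
    intro u hu
    rw [norm_sub_rev, one_sub_inner_eq_half_norm_sub_sq (hunit u) (hunit x),
      Real.norm_of_nonneg (by positivity)]
    gcongr
    refine (hlip.norm_sub_le u x).trans ?_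
    gcongr
    rw [Real.norm_eq_abs, abs_sub_comm x y]
    exact Set.abs_sub_left_of_mem_uIcc hu
  have hmvt := norm_sub_sub_smul_le_of_norm_deriv_sub_le hderiv hbound
  rw [smul_eq_mul, mul_one, ← inner_sub_left, Real.norm_eq_abs] at hmvt
  exact hmvt.trans_eq (by ring)

lemma abs_norm_sub_sq_sub_sq_le (hd : Differentiable ℝ γ) (hlip : LipschitzWith K (deriv γ))
    (hunit : ∀ s, ‖deriv γ s‖ = 1) (x y : ℝ) :
    |‖γ x - γ y‖ ^ 2 - (x - y) ^ 2| ≤ 2 * K ^ 2 * |x - y| ^ 4 := by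
  have hsplit : ‖γ x - γ y‖ ^ 2 - (x - y) ^ 2 = ‖γ x - γ y - (x - y) • deriv γ x‖ ^ 2 +
      2 * (x - y) * (⟪γ x - γ y, deriv γ x⟫ - (x - y)) := by
    rw [norm_sub_sq_real (γ x - γ y), norm_smul, hunit, inner_smul_right, Real.norm_eq_abs,
      mul_one, sq_abs]
    ring
  calc |‖γ x - γ y‖ ^ 2 - (x - y) ^ 2|
      ≤ ‖γ x - γ y - (x - y) • deriv γ x‖ ^ 2 +
          2 * |x - y| * |⟪γ x - γ y, deriv γ x⟫ - (x - y)| := by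
        rw [hsplit]
        refine (abs_add_le _ _).trans_eq ?_
        rw [abs_of_nonneg (sq_nonneg _), abs_mul, abs_mul, abs_two]
    _ ≤ (K * |x - y| ^ 2) ^ 2 + 2 * |x - y| * (K ^ 2 * |x - y| ^ 3 / 2) := by
        gcongr
        · exact norm_sub_sub_smul_deriv_le hd hlip x y
        · exact abs_inner_sub_deriv_sub_le hd hlip hunit x y
    _ = 2 * K ^ 2 * |x - y| ^ 4 := by ring

lemma abs_one_div_norm_sq_sub_one_div_sq_le (hd : Differentiable ℝ γ)
    (hlip : LipschitzWith K (deriv γ)) (hunit : ∀ s, ‖deriv γ s‖ = 1) (hc : 0 < c)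
    (hca : ChordArcBound c γ) (hxy : |x - y| ≤ 1 / 2) :
    |1 / ‖γ x - γ y‖ ^ 2 - 1 / (x - y) ^ 2| ≤ 2 * K ^ 2 / c ^ 2 := by
  rcases eq_or_ne x y with rfl | hne
  · simpa using (by positivity : 0 ≤ 2 * (K : ℝ) ^ 2 / c ^ 2)
  have : 0 < |x - y| := abs_pos.2 (sub_ne_zero.2 hne)
  have hD : 0 < ‖γ x - γ y‖ := (by positivity : 0 < c * |x - y|).trans_le (hca hxy)
  calc |1 / ‖γ x - γ y‖ ^ 2 - 1 / (x - y) ^ 2|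
      = |‖γ x - γ y‖ ^ 2 - (x - y) ^ 2| / (‖γ x - γ y‖ ^ 2 * |x - y| ^ 2) := by
        rw [← sq_abs (x - y), div_sub_div _ _ (by positivity) (by positivity), abs_div,
          one_mul, mul_one, abs_sub_comm, abs_of_pos (a := _ * _) (by positivity)]
    _ ≤ 2 * K ^ 2 * |x - y| ^ 4 / ((c * |x - y|) ^ 2 * |x - y| ^ 2) := by
        gcongr
        · exact abs_norm_sub_sq_sub_sq_le hd hlip hunit x y
        · exact hca hxy
    _ = 2 * K ^ 2 / c ^ 2 := by field_simp

lemma abs_invertedTangentCoord_sub_one_div_le (hd : Differentiable ℝ γ)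
    (hlip : LipschitzWith K (deriv γ)) (hunit : ∀ s, ‖deriv γ s‖ = 1) (hc : 0 < c)
    (hca : ChordArcBound c γ) (hxy : |x - y| ≤ 1 / 2) :
    |invertedTangentCoord γ x y - 1 / (x - y)| ≤ 5 / 2 * K ^ 2 / c ^ 2 * |x - y| := by
  rcases eq_or_ne x y with rfl | hne
  · simp [invertedTangentCoord]
  have : 0 < |x - y| := abs_pos.2 (sub_ne_zero.2 hne)
  have hsplit : invertedTangentCoord γ x y - 1 / (x - y) =
      (⟪γ x - γ y, deriv γ x⟫ - (x - y)) / ‖γ x - γ y‖ ^ 2 +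
        (1 / ‖γ x - γ y‖ ^ 2 - 1 / (x - y) ^ 2) * (x - y) := by
    rw [invertedTangentCoord]
    field_simp [sub_ne_zero.2 hne]
    ring
  calc |invertedTangentCoord γ x y - 1 / (x - y)|
      ≤ |⟪γ x - γ y, deriv γ x⟫ - (x - y)| / ‖γ x - γ y‖ ^ 2 +
          |1 / ‖γ x - γ y‖ ^ 2 - 1 / (x - y) ^ 2| * |x - y| := by
        rw [hsplit]
        refine (abs_add_le _ _).trans_eq ?_
        rw [abs_div, abs_mul, abs_of_nonneg (a := ‖γ x - γ y‖ ^ 2) (by positivity)]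
    _ ≤ K ^ 2 * |x - y| ^ 3 / 2 / (c * |x - y|) ^ 2 + 2 * K ^ 2 / c ^ 2 * |x - y| := by
        gcongr
        · exact abs_inner_sub_deriv_sub_le hd hlip hunit x y
        · exact hca hxy
        · exact abs_one_div_norm_sq_sub_one_div_sq_le hd hlip hunit hc hca hxy
    _ = 5 / 2 * K ^ 2 / c ^ 2 * |x - y| := by
        field_simp
        ring

lemma norm_reflection_deriv_sub_deriv_le (hd : Differentiable ℝ γ)
    (hlip : LipschitzWith K (deriv γ)) (hne : x ≠ y) :
    ‖(ℝ ∙ (γ x - γ y)).reflection (deriv γ x) - deriv γ y‖ ≤ 3 * K * |x - y| := by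
  have ht : 0 < |x - y| := abs_pos.2 (sub_ne_zero.2 hne)
  have hsecant : ‖deriv γ x - (x - y)⁻¹ • (γ x - γ y)‖ ≤ K * |x - y| := by
    have hscale : deriv γ x - (x - y)⁻¹ • (γ x - γ y) =
        -((x - y)⁻¹ • (γ x - γ y - (x - y) • deriv γ x)) := by
      rw [smul_sub _ (γ x - γ y), inv_smul_smul₀ (sub_ne_zero.2 hne), neg_sub]
    rw [hscale, norm_neg, norm_smul, norm_inv, Real.norm_eq_abs, inv_mul_le_iff₀ ht]
    exact (norm_sub_sub_smul_deriv_le hd hlip x y).trans_eq (by ring)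
  have hmem : (x - y)⁻¹ • (γ x - γ y) ∈ ℝ ∙ (γ x - γ y) :=
    Submodule.smul_mem _ _ (Submodule.mem_span_singleton_self _)
  have hreflect := norm_reflection_sub_le _ hmem (deriv γ x)
  have htangent : ‖deriv γ x - deriv γ y‖ ≤ K * |x - y| := hlip.norm_sub_le x y
  have htriangle := norm_sub_le_norm_sub_add_norm_sub
    ((ℝ ∙ (γ x - γ y)).reflection (deriv γ x)) (deriv γ x) (deriv γ y)
  linarith

lemma abs_one_div_norm_sq_sub_crossRatioRe_le (hd : Differentiable ℝ γ)
    (hlip : LipschitzWith K (deriv γ)) (hunit : ∀ s, ‖deriv γ s‖ = 1) (hc : 0 < c)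
    (hca : ChordArcBound c γ) (hxy : |x - y| ≤ 1 / 2) :
    |1 / ‖γ x - γ y‖ ^ 2 - crossRatioRe γ x y| ≤ 9 / 2 * K ^ 2 / c ^ 2 := by
  rcases eq_or_ne x y with rfl | hne
  · simpa [crossRatioRe] using (by positivity : 0 ≤ 9 / 2 * (K : ℝ) ^ 2 / c ^ 2)
  have : 0 < |x - y| := abs_pos.2 (sub_ne_zero.2 hne)
  rw [one_div_norm_sq_sub_crossRatioRe (hunit x) (hunit y), abs_of_nonneg (by positivity)]
  calc _ ≤ (3 * K * |x - y|) ^ 2 / (2 * (c * |x - y|) ^ 2) := by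
        gcongr
        · exact norm_reflection_deriv_sub_deriv_le hd hlip hne
        · exact hca hxy
    _ = 9 / 2 * K ^ 2 / c ^ 2 := by
        field_simp
        ring

lemma abs_crossRatioRe_sub_one_div_sq_le (hd : Differentiable ℝ γ)
    (hlip : LipschitzWith K (deriv γ)) (hunit : ∀ s, ‖deriv γ s‖ = 1) (hc : 0 < c)
    (hca : ChordArcBound c γ) (hxy : |x - y| ≤ 1 / 2) :
    |crossRatioRe γ x y - 1 / (x - y) ^ 2| ≤ 13 / 2 * K ^ 2 / c ^ 2 := by
  refine (abs_sub_le _ (1 / ‖γ x - γ y‖ ^ 2) _).trans ?_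
  rw [abs_sub_comm (crossRatioRe γ x y)]
  refine (add_le_add (abs_one_div_norm_sq_sub_crossRatioRe_le hd hlip hunit hc hca hxy)
    (abs_one_div_norm_sq_sub_one_div_sq_le hd hlip hunit hc hca hxy)).trans_eq ?_
  ring

end DiagonalEstimates

section ArcLengthDistance

open Function

variable {x y : ℝ}

lemma arcd_eq_abs_sub_of_le_half (hxy : |x - y| ≤ 1 / 2) : arcd x y = |x - y| :=
  min_eq_left (by linarith)

lemma arcd_eq_abs_sub_round (hxy : |x - y| ≤ 1) : arcd x y = |x - y - round (x - y)| := by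
  rw [abs_sub_round_eq_min, arcd]
  generalize x - y = t at *
  obtain ⟨hneg, hpos⟩ := abs_le.1 hxy
  rcases lt_or_ge t 0 with ht | ht
  · have hfract : Int.fract t = t + 1 :=
      Int.fract_eq_iff.2 ⟨by linarith, by linarith, -1, by push_cast; ring⟩
    rw [hfract, abs_of_neg ht, min_comm, sub_neg_eq_add, add_comm 1 t, sub_add_cancel_right]
  rcases hpos.eq_or_lt with rfl | hlt
  · simp
  · rw [Int.fract_eq_self.2 ⟨ht, hlt⟩, abs_of_nonneg ht]

lemma abs_sub_le_one_of_mem_Icc (hx : x ∈ Set.Icc (0 : ℝ) 1) (hy : y ∈ Set.Icc (0 : ℝ) 1) :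
    |x - y| ≤ 1 := by
  exact abs_le.2 ⟨by linarith [hx.1, hy.2], by linarith [hx.2, hy.1]⟩

lemma exists_int_abs_sub_add_le_half (hxy : |x - y| ≤ 1) :
    ∃ n : ℤ, |x - (y + n)| ≤ 1 / 2 ∧ arcd x y = |x - (y + n)| :=
  ⟨round (x - y), by rw [← sub_sub]; exact abs_sub_round _,
    by rw [← sub_sub]; exact arcd_eq_abs_sub_round hxy⟩

lemma intervalIntegral_arcd {F : Type*} [NormedAddCommGroup F] [NormedSpace ℝ F]
    {g : ℝ → ℝ → F} (hg : ∀ d, Periodic (fun y => g y d) 1) (hx : x ∈ Set.Icc (0 : ℝ) 1) :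
    ∫ y in (0 : ℝ)..1, g y (arcd x y) = ∫ y in (x - 1 / 2)..(x + 1 / 2), g y |x - y| := by
  let G : ℝ → F := fun y => g y |x - y - round (x - y)|
  have hG : Periodic G 1 := fun y => by
    have hround : x - (y + 1) - round (x - (y + 1)) = x - y - round (x - y) := by
      rw [← sub_sub, round_sub_one]
      push_cast
      ring
    simp only [G, hround]
    exact hg _ y
  calc ∫ y in (0 : ℝ)..1, g y (arcd x y) = ∫ y in (0 : ℝ)..0 + 1, G y := by
        rw [zero_add]
        refine intervalIntegral.integral_congr fun y hy => ?_
        rw [Set.uIcc_of_le zero_le_one] at hy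
        simp only [G, arcd_eq_abs_sub_round (abs_sub_le_one_of_mem_Icc hx hy)]
    _ = ∫ y in (x - 1 / 2)..(x - 1 / 2) + 1, G y := hG.intervalIntegral_add_eq _ _
    _ = ∫ y in (x - 1 / 2)..(x + 1 / 2), G y := by congr 1; ring
    _ = ∫ y in (x - 1 / 2)..(x + 1 / 2), g y |x - y| := by
        refine intervalIntegral.integral_congr fun y hy => ?_
        rw [Set.uIcc_of_le (by linarith)] at hy
        have hxy : |x - y| ≤ 1 / 2 := abs_le.2 ⟨by linarith [hy.2], by linarith [hy.1]⟩
        simp only [G]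
        rw [← arcd_eq_abs_sub_round (by linarith), arcd_eq_abs_sub_of_le_half hxy]

end ArcLengthDistance

section Integration

open Function
open scoped NNReal

/-- O'Hara's energy of a closed curve of length `1`, normalized by the additive constant `-4` that
makes the energy of the round circle vanish. -/
def oHaraEnergy {F : Type*} [NormedAddCommGroup F] (γ : ℝ → F) : ℝ :=
  -4 + ∫ p in Set.Icc (0 : ℝ) 1 ×ˢ Set.Icc (0 : ℝ) 1,
    (1 / ‖γ p.1 - γ p.2‖ ^ 2 - 1 / arcd p.1 p.2 ^ 2)

variable {E : Type*} [NormedAddCommGroup E] [InnerProductSpace ℝ E] {γ : ℝ → E} {x c : ℝ}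
  {K : ℝ≥0}

lemma continuousAt_invertedTangentCoord_sub_one_div (hd : Differentiable ℝ γ)
    (hlip : LipschitzWith K (deriv γ)) (hunit : ∀ s, ‖deriv γ s‖ = 1) (hc : 0 < c)
    (hca : ChordArcBound c γ) :
    ContinuousAt (fun y => invertedTangentCoord γ x y - 1 / (x - y)) x := by
  refine continuousAt_of_locally_lipschitz one_half_pos (5 / 2 * K ^ 2 / c ^ 2) fun y hy => ?_
  rw [dist_comm y x, Real.dist_eq] at hy ⊢
  simpa [invertedTangentCoord, Real.dist_eq] using
    abs_invertedTangentCoord_sub_one_div_le hd hlip hunit hc hca hy.le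

lemma hasDerivAt_invertedTangentCoord_sub_one_div {y : ℝ} (hd : DifferentiableAt ℝ γ y)
    (hne : γ x ≠ γ y) :
    HasDerivAt (fun y => invertedTangentCoord γ x y - 1 / (x - y))
      (crossRatioRe γ x y - 1 / (x - y) ^ 2) y := by
  have hxy : x - y ≠ 0 := sub_ne_zero.2 fun h => hne (congrArg γ h)
  refine (hasDerivAt_invertedTangentCoord hd hne).sub ?_
  simpa using ((hasDerivAt_id y).const_sub x).fun_inv hxy

lemma intervalIntegrable_crossRatioRe_sub_one_div_sq (hd : Differentiable ℝ γ)
    (hlip : LipschitzWith K (deriv γ)) (hunit : ∀ s, ‖deriv γ s‖ = 1) (hc : 0 < c)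
    (hca : ChordArcBound c γ) :
    IntervalIntegrable (fun y => crossRatioRe γ x y - 1 / (x - y) ^ 2) volume
      (x - 1 / 2) (x + 1 / 2) := by
  have hmeas : Measurable fun y => crossRatioRe γ x y - 1 / (x - y) ^ 2 :=
    ((measurable_crossRatioRe hd.continuous hlip.continuous).comp measurable_prodMk_left).sub
      (by fun_prop)
  rw [intervalIntegrable_iff_integrableOn_Icc_of_le (by linarith)]
  refine Measure.integrableOn_of_bounded (by simp) hmeas.aestronglyMeasurable
    (M := 13 / 2 * K ^ 2 / c ^ 2) ?_
  filter_upwards [ae_restrict_mem measurableSet_Icc] with y hy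
  exact abs_crossRatioRe_sub_one_div_sq_le hd hlip hunit hc hca
    (abs_le.2 ⟨by linarith [hy.2], by linarith [hy.1]⟩)

lemma intervalIntegral_crossRatioRe_sub_one_div_sq (hd : Differentiable ℝ γ)
    (hlip : LipschitzWith K (deriv γ)) (hper : Periodic γ 1)
    (hinj : ∀ s t, γ s = γ t → ∃ n : ℤ, s - t = n) (hunit : ∀ s, ‖deriv γ s‖ = 1) (hc : 0 < c)
    (hca : ChordArcBound c γ) :
    ∫ y in (x - 1 / 2)..(x + 1 / 2), (crossRatioRe γ x y - 1 / (x - y) ^ 2) = 4 := by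
  have hderiv : ∀ y ∈ Set.Icc (x - 1 / 2) (x + 1 / 2), y ≠ x →
      HasDerivAt (fun y => invertedTangentCoord γ x y - 1 / (x - y))
        (crossRatioRe γ x y - 1 / (x - y) ^ 2) y := fun y hy hne =>
    hasDerivAt_invertedTangentCoord_sub_one_div (hd y) <| ne_of_abs_sub_lt_one hinj
      (abs_lt.2 ⟨by linarith [hy.2], by linarith [hy.1]⟩) hne.symm
  have hle : x - 1 / 2 ≤ x + 1 / 2 := by linarith
  have hends : invertedTangentCoord γ x (x + 1 / 2) = invertedTangentCoord γ x (x - 1 / 2) := by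
    rw [← periodic_invertedTangentCoord hper x (x - 1 / 2)]
    congr 1
    ring
  rw [integral_eq_of_hasDerivAt_off_countable_of_le _ _ hle (Set.countable_singleton x)
    (fun y hy => ?_) (fun y hy => hderiv y (Set.Ioo_subset_Icc_self hy.1) hy.2)
    (intervalIntegrable_crossRatioRe_sub_one_div_sq hd hlip hunit hc hca)]
  · rw [hends]
    ring
  · rcases eq_or_ne y x with rfl | hne
    · exact (continuousAt_invertedTangentCoord_sub_one_div hd hlip hunit hc
        hca).continuousWithinAt
    · exact (hderiv y hy hne).continuousAt.continuousWithinAt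

lemma setIntegral_crossRatioRe_sub_one_div_arcd_sq (hd : Differentiable ℝ γ)
    (hlip : LipschitzWith K (deriv γ)) (hper : Periodic γ 1)
    (hinj : ∀ s t, γ s = γ t → ∃ n : ℤ, s - t = n) (hunit : ∀ s, ‖deriv γ s‖ = 1) (hc : 0 < c)
    (hca : ChordArcBound c γ) (hx : x ∈ Set.Icc (0 : ℝ) 1) :
    ∫ y in Set.Icc (0 : ℝ) 1, (crossRatioRe γ x y - 1 / arcd x y ^ 2) = 4 := by
  rw [integral_Icc_eq_integral_Ioc, ← intervalIntegral.integral_of_le zero_le_one,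
    intervalIntegral_arcd (g := fun y d => crossRatioRe γ x y - 1 / d ^ 2)
      (fun d y => by simp only [periodic_crossRatioRe hper x y]) hx]
  simp only [sq_abs]
  exact intervalIntegral_crossRatioRe_sub_one_div_sq hd hlip hper hinj hunit hc hca

lemma ae_ne_of_injective_mod_int {X : Type*} [TopologicalSpace X] [T2Space X] {γ : ℝ → X}
    (hγ : Continuous γ) (hinj : ∀ s t, γ s = γ t → ∃ n : ℤ, s - t = n) :
    ∀ᵐ p : ℝ × ℝ, γ p.1 ≠ γ p.2 := by
  have hmeas : MeasurableSet {p : ℝ × ℝ | γ p.1 = γ p.2} :=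
    (isClosed_eq (by fun_prop) (by fun_prop)).measurableSet
  simp only [ae_iff, not_not]
  rw [Measure.volume_eq_prod, Measure.measure_prod_null hmeas]
  refine Filter.Eventually.of_forall fun x => Set.Countable.measure_zero ?_ _
  refine (Set.countable_range fun n : ℤ => x - n).mono fun y hy => ?_
  obtain ⟨n, hn⟩ := hinj x y hy
  exact ⟨n, by simp only [← hn, sub_sub_cancel]⟩

lemma integrableOn_unitSquare_of_abs_le {f : ℝ × ℝ → ℝ} {C : ℝ} (hf : Measurable f)
    (hC : ∀ x y, |x - y| ≤ 1 → |f (x, y)| ≤ C) :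
    IntegrableOn f (Set.Icc 0 1 ×ˢ Set.Icc 0 1) := by
  refine Measure.integrableOn_of_bounded (isCompact_Icc.prod isCompact_Icc).measure_ne_top
    hf.aestronglyMeasurable (M := C) ?_
  filter_upwards [ae_restrict_mem (measurableSet_Icc.prod measurableSet_Icc)] with p hp
  exact hC p.1 p.2 (abs_sub_le_one_of_mem_Icc hp.1 hp.2)

lemma integrableOn_one_div_norm_sq_sub_one_div_arcd_sq (hd : Differentiable ℝ γ)
    (hlip : LipschitzWith K (deriv γ)) (hper : Periodic γ 1) (hunit : ∀ s, ‖deriv γ s‖ = 1)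
    (hc : 0 < c) (hca : ChordArcBound c γ) :
    IntegrableOn (fun p : ℝ × ℝ => 1 / ‖γ p.1 - γ p.2‖ ^ 2 - 1 / arcd p.1 p.2 ^ 2)
      (Set.Icc 0 1 ×ˢ Set.Icc 0 1) := by
  have hcont := hd.continuous
  have harcd : Continuous fun p : ℝ × ℝ => arcd p.1 p.2 := by
    unfold arcd
    fun_prop
  refine integrableOn_unitSquare_of_abs_le (C := 2 * K ^ 2 / c ^ 2)
    (.sub (.div measurable_const (Continuous.measurable (by fun_prop)))
      (.div measurable_const (harcd.pow 2).measurable)) fun x y hxy => ?_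
  obtain ⟨n, hn, harcd_eq⟩ := exists_int_abs_sub_add_le_half hxy
  have hγ : γ (y + n) = γ y := by simpa using hper.int_mul n y
  simpa [harcd_eq, hγ] using
    abs_one_div_norm_sq_sub_one_div_sq_le hd hlip hunit hc hca hn

lemma integrableOn_one_div_norm_sq_sub_crossRatioRe (hd : Differentiable ℝ γ)
    (hlip : LipschitzWith K (deriv γ)) (hper : Periodic γ 1) (hunit : ∀ s, ‖deriv γ s‖ = 1)
    (hc : 0 < c) (hca : ChordArcBound c γ) :
    IntegrableOn (fun p : ℝ × ℝ => 1 / ‖γ p.1 - γ p.2‖ ^ 2 - crossRatioRe γ p.1 p.2)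
      (Set.Icc 0 1 ×ˢ Set.Icc 0 1) := by
  have hcont := hd.continuous
  refine integrableOn_unitSquare_of_abs_le (C := 9 / 2 * K ^ 2 / c ^ 2)
    (.sub (.div measurable_const (Continuous.measurable (by fun_prop)))
      (measurable_crossRatioRe hcont hlip.continuous)) fun x y hxy => ?_
  obtain ⟨n, hn, -⟩ := exists_int_abs_sub_add_le_half hxy
  have hγ : γ (y + n) = γ y := by simpa using hper.int_mul n y
  have hcr : crossRatioRe γ x (y + n) = crossRatioRe γ x y := by
    simpa using (periodic_crossRatioRe hper x).int_mul n y
  simpa [hcr, hγ] using abs_one_div_norm_sq_sub_crossRatioRe_le hd hlip hunit hc hca hn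

theorem oHaraEnergy_eq_integral_crossRatioRe (hd : Differentiable ℝ γ)
    (hlip : LipschitzWith K (deriv γ)) (hper : Periodic γ 1)
    (hinj : ∀ s t, γ s = γ t → ∃ n : ℤ, s - t = n) (hunit : ∀ s, ‖deriv γ s‖ = 1) :
    oHaraEnergy γ = ∫ p in Set.Icc (0 : ℝ) 1 ×ˢ Set.Icc (0 : ℝ) 1,
      (1 / ‖γ p.1 - γ p.2‖ ^ 2 - crossRatioRe γ p.1 p.2) := by
  obtain ⟨c, hc, hca⟩ := exists_chordArcBound hd hlip hper hinj hunit
  have henergy := integrableOn_one_div_norm_sq_sub_one_div_arcd_sq hd hlip hper hunit hc hca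
  have hcross := integrableOn_one_div_norm_sq_sub_crossRatioRe hd hlip hper hunit hc hca
  have hdiff := integral_sub henergy hcross
  have hint := henergy.sub hcross
  simp only [sub_sub_sub_cancel_left] at hdiff
  have hfour : ∫ p in Set.Icc (0 : ℝ) 1 ×ˢ Set.Icc (0 : ℝ) 1,
      (crossRatioRe γ p.1 p.2 - 1 / arcd p.1 p.2 ^ 2) = 4 := by
    simp only [Pi.sub_def, sub_sub_sub_cancel_left] at hint
    rw [Measure.volume_eq_prod] at hint ⊢
    rw [setIntegral_prod _ hint, setIntegral_congr_fun measurableSet_Icc fun x hx =>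
      setIntegral_crossRatioRe_sub_one_div_arcd_sq hd hlip hper hinj hunit hc hca hx]
    simp
  rw [oHaraEnergy]
  linarith

end Integration

theorem energy_eq_cross_ratio_area_formula_general (γ : ℝ → E3) {K : NNReal}
    (hd : Differentiable ℝ γ)
    (hlip : LipschitzWith K (deriv γ))
    (hper : Function.Periodic γ 1)
    (hinj : ∀ s t : ℝ, γ s = γ t → ∃ n : ℤ, s - t = n)
    (hunit : ∀ s : ℝ, ‖deriv γ s‖ = 1) :
    IntegrableOn
      (fun p : ℝ × ℝ => 1 / ‖γ p.1 - γ p.2‖ ^ 2 - 1 / arcd p.1 p.2 ^ 2)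
      (Set.Icc 0 1 ×ˢ Set.Icc 0 1) ∧
    IntegrableOn
      (fun p : ℝ × ℝ => 1 / ‖γ p.1 - γ p.2‖ ^ 2 -
        (1 / 2) * B2 (deriv (fun u => nwedge γ u p.2) p.1)
          (deriv (fun v => nwedge γ p.1 v) p.2))
      (Set.Icc 0 1 ×ˢ Set.Icc 0 1) ∧
    (∀ x ∈ Set.Icc (0:ℝ) 1, ∀ y ∈ Set.Icc (0:ℝ) 1, γ x ≠ γ y →
      0 ≤ 1 / ‖γ x - γ y‖ ^ 2 -
        (1 / 2) * B2 (deriv (fun u => nwedge γ u y) x)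
          (deriv (fun v => nwedge γ x v) y)) ∧
    -4 + (∫ p in Set.Icc (0:ℝ) 1 ×ˢ Set.Icc (0:ℝ) 1,
        (1 / ‖γ p.1 - γ p.2‖ ^ 2 - 1 / arcd p.1 p.2 ^ 2)) =
      ∫ p in Set.Icc (0:ℝ) 1 ×ˢ Set.Icc (0:ℝ) 1,
        (1 / ‖γ p.1 - γ p.2‖ ^ 2 -
          (1 / 2) * B2 (deriv (fun u => nwedge γ u p.2) p.1)
            (deriv (fun v => nwedge γ p.1 v) p.2)) := by
  obtain ⟨c, hc, hca⟩ := exists_chordArcBound hd hlip hper hinj hunit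
  have hB2 {x y : ℝ} (hne : γ x ≠ γ y) :
      (1 / 2) * B2 (deriv (fun u => nwedge γ u y) x) (deriv (fun v => nwedge γ x v) y) =
        crossRatioRe γ x y := half_B2_deriv_nwedge_eq_crossRatioRe (hd x) (hd y) hne
  have hae : (fun p : ℝ × ℝ => 1 / ‖γ p.1 - γ p.2‖ ^ 2 - crossRatioRe γ p.1 p.2)
      =ᵐ[volume.restrict (Set.Icc (0:ℝ) 1 ×ˢ Set.Icc (0:ℝ) 1)]
      fun p => 1 / ‖γ p.1 - γ p.2‖ ^ 2 - (1 / 2) * B2 (deriv (fun u => nwedge γ u p.2) p.1)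
        (deriv (fun v => nwedge γ p.1 v) p.2) := by
    filter_upwards [ae_restrict_of_ae (ae_ne_of_injective_mod_int hd.continuous hinj)] with p hp
    rw [hB2 hp]
  refine ⟨integrableOn_one_div_norm_sq_sub_one_div_arcd_sq hd hlip hper hunit hc hca,
    (integrableOn_one_div_norm_sq_sub_crossRatioRe hd hlip hper hunit hc hca).congr hae,
    fun x _ y _ hne => ?_, ?_⟩
  · rw [hB2 hne, one_div_norm_sq_sub_crossRatioRe (hunit x) (hunit y)]
    positivity
  · rw [← integral_congr_ae hae]
    exact oHaraEnergy_eq_integral_crossRatioRe hd hlip hper hinj hunit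

/-- O'Hara's energy expressed through the infinitesimal cross ratio and the signed area
form: `E∘(γ) = −4 + ∬ (1/|γ(x)−γ(y)|² − 1/d(x,y)²) dx dy
= ∬ (1/|γ(x)−γ(y)|² − (1/2)·B₂(∂s/∂x, ∂s/∂y)) dx dy`, the right-hand integrand being
nonnegative (off the diagonal) and integrable. -/
theorem energy_eq_cross_ratio_area_formula (γ : ℝ → E3)
    (hsm : ContDiff ℝ (⊤ : ℕ∞) γ)
    (hper : Function.Periodic γ 1)
    (hinj : ∀ s t : ℝ, γ s = γ t → ∃ n : ℤ, s - t = n)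
    (hunit : ∀ s : ℝ, ‖deriv γ s‖ = 1) :
    IntegrableOn
      (fun p : ℝ × ℝ => 1 / ‖γ p.1 - γ p.2‖ ^ 2 - 1 / arcd p.1 p.2 ^ 2)
      (Set.Icc 0 1 ×ˢ Set.Icc 0 1) ∧
    IntegrableOn
      (fun p : ℝ × ℝ => 1 / ‖γ p.1 - γ p.2‖ ^ 2 -
        (1 / 2) * B2 (deriv (fun u => nwedge γ u p.2) p.1)
          (deriv (fun v => nwedge γ p.1 v) p.2))
      (Set.Icc 0 1 ×ˢ Set.Icc 0 1) ∧
    (∀ x ∈ Set.Icc (0:ℝ) 1, ∀ y ∈ Set.Icc (0:ℝ) 1, γ x ≠ γ y →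
      0 ≤ 1 / ‖γ x - γ y‖ ^ 2 -
        (1 / 2) * B2 (deriv (fun u => nwedge γ u y) x)
          (deriv (fun v => nwedge γ x v) y)) ∧
    -4 + (∫ p in Set.Icc (0:ℝ) 1 ×ˢ Set.Icc (0:ℝ) 1,
        (1 / ‖γ p.1 - γ p.2‖ ^ 2 - 1 / arcd p.1 p.2 ^ 2)) =
      ∫ p in Set.Icc (0:ℝ) 1 ×ˢ Set.Icc (0:ℝ) 1,
        (1 / ‖γ p.1 - γ p.2‖ ^ 2 -
          (1 / 2) * B2 (deriv (fun u => nwedge γ u p.2) p.1)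
            (deriv (fun v => nwedge γ p.1 v) p.2)) := by
  have hsm' : ContDiff ℝ 1 (deriv γ) := (contDiff_infty_iff_deriv.1 hsm).2.of_le (by simp)
  obtain ⟨K, hK⟩ := exists_lipschitzWith_of_periodic hsm' (periodic_deriv hper) one_ne_zero
  exact energy_eq_cross_ratio_area_formula_general γ (hsm.differentiable (by simp)) hK hper hinj
    hunit
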